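/- Fix an integer u ≥ 1. Let R = ∏_{p prime} ℤ_p be the product over all primes of the rings of p-adic integers, and for each n let A be a random n×(n+u) matrix over R whose entries are independent and identically distributed according to the Haar probability measure on R. Then lim_{n→∞} P(A : R^(n+u) → R^n is surjective) = ∏_{k=u+1}^{∞} ζ(k)^(−1), where ζ is the Riemann zeta function. -/

import Mathlib

open MeasureTheory Filter

instance (p : Nat.Primes) : Fact (Nat.Prime (p : ℕ)) := ⟨p.2⟩

noncomputable instance (p : ℕ) [Fact p.Prime] : MeasurableSpace ℤ_[p] := borel _

instance (p : ℕ) [Fact p.Prime] : BorelSpace ℤ_[p] := ⟨rfl⟩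

/-- The product of the rings of `p`-adic integers over all primes `p`
(isomorphic to the profinite completion of `ℤ`). -/
abbrev Zhat : Type := ∀ p : Nat.Primes, ℤ_[(p : ℕ)]

/-!
A matrix over a product of local rings is surjective iff its reduction over each residue field is:
a right inverse modulo the maximal ideal lifts to one over the local ring, because a determinant
that is a unit modulo the maximal ideal is a unit. A translation-invariant probability measure on a
finite group is uniform; hence the reductions of a Haar random matrix modulo the primes are uniform,
and they are independent, because modulo finitely many primes at once the reduction is uniform on
the product. Counting matrices of full row rank over `𝔽_p` gives `∏ k < n, (1 - p ^ (-(k + u + 1)))`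
for the prime `p`, and the product over all primes shows that an `n × (n + u)` matrix is surjective
with probability exactly `∏ k < n, 1 / ζ(k + u + 1)`. These factors lie in `[0, 1]`, so the partial
products converge to the infinite product.
-/

open ProbabilityTheory
open scoped Topology

section HaarFinite

theorem measureReal_uniformOn_univ {Ω : Type*} [Finite Ω] [MeasurableSpace Ω]
    [MeasurableSingletonClass Ω] (s : Set Ω) :
    (uniformOn Set.univ).real s = (Nat.card s : ℝ) / Nat.card Ω := by
  have := Fintype.ofFinite Ω
  rw [measureReal_def, uniformOn_univ, ENNReal.toReal_div,
    Measure.count_apply_finite s s.toFinite]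
  simp [Nat.card_coe_set_eq, Set.ncard_eq_toFinset_card s s.toFinite]

variable {G : Type*} [Group G] [MeasurableSpace G]

@[to_additive]
theorem eq_uniformOn_univ_of_isMulLeftInvariant [Finite G] [MeasurableSingletonClass G]
    (ν : Measure G) [IsProbabilityMeasure ν] [ν.IsMulLeftInvariant] :
    ν = uniformOn Set.univ := by
  have := Fintype.ofFinite G
  have translate (g : G) : ν {g} = ν {1} := by
    rw [← measure_preimage_mul ν g {g}]
    congr 1
    ext x
    simp
  have total : Fintype.card G * ν {1} = 1 := by
    rw [← measure_univ (μ := ν), ← Finset.coe_univ, ← sum_measure_singleton]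
    simp only [translate, Finset.sum_const, Finset.card_univ, nsmul_eq_mul]
  refine Measure.ext_of_singleton fun g => ?_
  rw [translate, uniformOn_univ, Measure.count_singleton,
    ENNReal.eq_div_iff (by simp) (by simp), total]

variable [MeasurableMul G]

@[to_additive]
theorem map_eq_uniformOn_univ_of_isMulLeftInvariant {H : Type*} [Group H] [Finite H]
    [MeasurableSpace H] [MeasurableSingletonClass H] (ν : Measure G) [IsProbabilityMeasure ν]
    [ν.IsMulLeftInvariant] (φ : G →* H) (hφ : Measurable φ) (hsurj : Function.Surjective φ) :
    ν.map φ = uniformOn Set.univ := by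
  have := Measure.isProbabilityMeasure_map (μ := ν) hφ.aemeasurable
  have : (ν.map φ).IsMulLeftInvariant := isMulLeftInvariant_map φ.toMulHom hφ hsurj
  exact eq_uniformOn_univ_of_isMulLeftInvariant _

@[to_additive]
theorem iIndepFun_of_isMulLeftInvariant_of_surjective {ι : Type*} {H : ι → Type*} [∀ i, Group (H i)]
    [∀ i, Finite (H i)] [∀ i, MeasurableSpace (H i)] [∀ i, MeasurableSingletonClass (H i)]
    (ν : Measure G) [IsProbabilityMeasure ν] [ν.IsMulLeftInvariant] (φ : ∀ i, G →* H i)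
    (hφ : ∀ i, Measurable (φ i)) (hsurj : Function.Surjective (MonoidHom.pi φ)) :
    iIndepFun (fun i => φ i) ν := by
  refine iIndepFun_iff_finset.2 fun S => ?_
  refine (iIndepFun_iff_map_fun_eq_pi_map fun i : S => (hφ i).aemeasurable).2 ?_
  have (i : S) : IsProbabilityMeasure (ν.map (φ i)) :=
    Measure.isProbabilityMeasure_map (hφ i).aemeasurable
  have (i : S) : (ν.map (φ i)).IsMulLeftInvariant :=
    isMulLeftInvariant_map (φ i).toMulHom (hφ i)
      ((Function.surjective_eval (i : ι)).comp hsurj)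
  have joint_surjective : Function.Surjective (MonoidHom.pi fun i : S => φ i) :=
    (Subtype.surjective_restrict (p := (· ∈ S))).comp hsurj
  calc ν.map (MonoidHom.pi fun i : S => φ i)
      = uniformOn Set.univ :=
        map_eq_uniformOn_univ_of_isMulLeftInvariant ν _ (measurable_pi_lambda _ fun i => hφ i)
          joint_surjective
    _ = Measure.pi fun i : S => ν.map (φ i) := (eq_uniformOn_univ_of_isMulLeftInvariant _).symm

end HaarFinite

theorem hasProd_measureReal_iInter_of_iIndepSet {Ω ι : Type*} [MeasurableSpace Ω] [Countable ι]
    {ν : Measure Ω} {s : ι → Set Ω} (hs : ∀ i, MeasurableSet (s i)) (hind : iIndepSet s ν) :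
    HasProd (fun i => ν.real (s i)) (ν.real (⋂ i, s i)) := by
  have := hind.isProbabilityMeasure
  have hlim : Tendsto (ν ∘ fun S : Finset ι => ⋂ i ∈ S, s i) atTop
      (𝓝 (ν (⋂ S : Finset ι, ⋂ i ∈ S, s i))) :=
    tendsto_measure_iInter_atTop
      (fun S => (S.measurableSet_biInter fun i _ => hs i).nullMeasurableSet)
      (fun S T hST => Set.biInter_subset_biInter_left hST) ⟨∅, measure_ne_top _ _⟩
  rw [← Set.iInter_eq_iInter_finset] at hlim
  refine ((ENNReal.tendsto_toReal (measure_ne_top ν _)).comp hlim).congr fun S => ?_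
  simp only [Function.comp_apply, hind.meas_biInter, ENNReal.toReal_prod, measureReal_def]

section Surjectivity

variable {m n : Type*} [Fintype n]

theorem mulVec_map_surjective_iff [Finite m] {R S : Type*} [CommRing R] [CommRing S] (f : R →+* S)
    [IsLocalHom f] (hf : Function.Surjective f) (A : Matrix m n R) :
    Function.Surjective (A.map f).mulVec ↔ Function.Surjective A.mulVec := by
  classical
  have := Fintype.ofFinite m
  simp only [Matrix.mulVec_surjective_iff_exists_right_inverse]
  constructor
  · rintro ⟨B, hB⟩
    obtain ⟨C, rfl⟩ : ∃ C : Matrix n m R, C.map f = B :=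
      ⟨B.map (Function.surjInv hf), by ext; simp [Function.surjInv_eq hf]⟩
    have isUnit_det : IsUnit (A * C).det := by
      refine isUnit_of_map_unit f _ ?_
      rw [RingHom.map_det, RingHom.mapMatrix_apply, Matrix.map_mul, hB, Matrix.det_one]
      exact isUnit_one
    exact ⟨C * (A * C)⁻¹, by rw [← Matrix.mul_assoc, Matrix.mul_nonsing_inv _ isUnit_det]⟩
  · rintro ⟨B, hB⟩
    exact ⟨B.map f, by rw [← Matrix.map_mul, hB, Matrix.map_one _ f.map_zero f.map_one]⟩

theorem mulVec_surjective_iff_forall_eval {ι : Type*} {R : ι → Type*} [∀ i, Semiring (R i)]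
    (A : Matrix m n (∀ i, R i)) :
    Function.Surjective A.mulVec ↔
      ∀ i, Function.Surjective (A.map (Pi.evalRingHom R i)).mulVec := by
  have eval_mulVec (v : n → ∀ i, R i) (i : ι) :
      (A.map (Pi.evalRingHom R i)).mulVec (fun k => v k i) = fun j => A.mulVec v j i := by
    ext j
    simp [Matrix.mulVec, dotProduct]
  constructor
  · intro hA i w
    classical
    obtain ⟨v, hv⟩ := hA fun j => Pi.single i (w j)
    exact ⟨fun k => v k i, by simp [eval_mulVec, hv]⟩
  · intro hA w
    choose v hv using fun i => hA i fun j => w j i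
    refine ⟨fun k i => v i k, ?_⟩
    ext j i
    rw [← congrFun (hv i) j]
    exact (congrFun (eval_mulVec (fun k i => v i k) i) j).symm

theorem mulVec_surjective_iff_linearIndependent_row [Finite m] {K : Type*} [Field K]
    (A : Matrix m n K) : Function.Surjective A.mulVec ↔ LinearIndependent K A.row := by
  have := Fintype.ofFinite m
  calc
    Function.Surjective A.mulVec ↔ LinearMap.range A.mulVecLin = ⊤ := by
      rw [LinearMap.range_eq_top, Matrix.coe_mulVecLin]
    _ ↔ A.rank = Fintype.card m := by
      rw [← Module.finrank_fintype_fun_eq_card K, Matrix.rank]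
      exact ⟨fun h => by rw [h, finrank_top], Submodule.eq_top_of_finrank_eq⟩
    _ ↔ LinearIndependent K A.row := by
      rw [linearIndependent_iff_card_eq_finrank_span, A.rank_eq_finrank_span_row, eq_comm,
        Set.finrank]

end Surjectivity

theorem card_linearIndependent_div_card {K : Type*} [Field K] [Finite K] (n u : ℕ) :
    (Nat.card {v : Fin n → Fin (n + u) → K // LinearIndependent K v} : ℝ) /
        Nat.card (Fin n → Fin (n + u) → K) =
      ∏ k ∈ Finset.range n, (1 - ((Nat.card K : ℝ) ^ (k + u + 1))⁻¹) := by
  have := Fintype.ofFinite K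
  have hq : 0 < Nat.card K := Nat.card_pos
  calc _ = ∏ k ∈ Finset.range n,
        ((Nat.card K ^ (n + u) - Nat.card K ^ k : ℕ) : ℝ) / Nat.card K ^ (n + u) := by
        rw [card_linearIndependent (by simp), Finset.prod_div_distrib,
          Fin.prod_univ_eq_prod_range (fun k => Fintype.card K ^ _ - Fintype.card K ^ k)]
        simp
    _ = ∏ k ∈ Finset.range n, (1 - ((Nat.card K : ℝ) ^ (k + u + 1))⁻¹) := by
        rw [← Finset.prod_range_reflect]
        refine Finset.prod_congr rfl fun k hk => ?_
        have hk := Finset.mem_range.1 hk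
        have split_exponent : n + u = (n - 1 - k) + (k + u + 1) := by omega
        rw [Nat.cast_sub (Nat.pow_le_pow_right hq (by omega)), split_exponent]
        push_cast
        rw [pow_add]
        field_simp

section ProductRing

variable {n m : ℕ}

/-- The additive homomorphism applying a ring homomorphism to each entry of a matrix, with matrices
as functions of two indices so that they carry the product measurable structure. -/
def mapEntries {R S : Type*} [Semiring R] [Semiring S] (f : R →+* S) (n m : ℕ) :
    (Fin n → Fin m → R) →+ (Fin n → Fin m → S) :=
  (f.toAddMonoidHom.compLeft (Fin m)).compLeft (Fin n)

theorem measurable_mapEntries {R S : Type*} [Semiring R] [Semiring S] [MeasurableSpace R]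
    [MeasurableSpace S] {f : R →+* S} (hf : Measurable f) : Measurable (mapEntries f n m) :=
  measurable_pi_lambda _ fun j => measurable_pi_lambda _ fun k =>
    hf.comp ((measurable_pi_apply k).comp (measurable_pi_apply j))

theorem mapEntries_surjective {R S : Type*} [Semiring R] [Semiring S] {f : R →+* S}
    (hf : Function.Surjective f) : Function.Surjective (mapEntries f n m) :=
  hf.comp_left.comp_left

theorem pi_mapEntries_surjective {ι : Type*} {R S : ι → Type*} [∀ i, Semiring (R i)]
    [∀ i, Semiring (S i)] {f : ∀ i, R i →+* S i} (hf : ∀ i, Function.Surjective (f i)) :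
    Function.Surjective
      (AddMonoidHom.pi fun i => mapEntries ((f i).comp (Pi.evalRingHom R i)) n m) := fun B =>
  ⟨fun j k i => Function.surjInv (hf i) (B i j k), by
    ext i j k
    exact Function.surjInv_eq (hf i) (B i j k)⟩

variable {ι : Type*} {R K : ι → Type*} [∀ i, CommRing (R i)] [∀ i, Field (K i)]
  {f : ∀ i, R i →+* K i}

theorem mulVecLin_surjective_iff_linearIndependent_residue [∀ i, IsLocalHom (f i)]
    (hf : ∀ i, Function.Surjective (f i)) (A : Fin n → Fin m → ∀ i, R i) :
    Function.Surjective (Matrix.of A).mulVecLin ↔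
      ∀ i, LinearIndependent (K i) (mapEntries ((f i).comp (Pi.evalRingHom R i)) n m A) := by
  rw [Matrix.coe_mulVecLin, mulVec_surjective_iff_forall_eval]
  refine forall_congr' fun i => ?_
  rw [← mulVec_map_surjective_iff (f i) (hf i), mulVec_surjective_iff_linearIndependent_row]
  rfl

theorem measureReal_linearIndependent_mapEntries {u : ℕ} {R K : Type*} [Ring R] [MeasurableSpace R]
    [MeasurableAdd R] [Field K] [Finite K] [MeasurableSpace K] [MeasurableSingletonClass K]
    {f : R →+* K} (hf : Function.Surjective f) (hmeas : Measurable f)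
    (ν : Measure (Fin n → Fin (n + u) → R)) [IsProbabilityMeasure ν] [ν.IsAddLeftInvariant] :
    ν.real (mapEntries f n (n + u) ⁻¹' {v | LinearIndependent K v}) =
      ∏ k ∈ Finset.range n, (1 - ((Nat.card K : ℝ) ^ (k + u + 1))⁻¹) := by
  have hφ := measurable_mapEntries (n := n) (m := n + u) hmeas
  rw [← map_measureReal_apply hφ (Set.toFinite _).measurableSet,
    map_eq_uniformOn_univ_of_isAddLeftInvariant ν _ hφ (mapEntries_surjective hf),
    measureReal_uniformOn_univ, ← card_linearIndependent_div_card, Set.coe_ofPred]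

theorem hasProd_measureReal_mulVecLin_surjective [Countable ι]
    [∀ i, IsLocalHom (f i)] [∀ i, MeasurableSpace (R i)] [∀ i, MeasurableAdd (R i)]
    [∀ i, Finite (K i)] [∀ i, MeasurableSpace (K i)] [∀ i, MeasurableSingletonClass (K i)] {u : ℕ}
    (hf : ∀ i, Function.Surjective (f i)) (hmeas : ∀ i, Measurable (f i))
    (ν : Measure (Fin n → Fin (n + u) → ∀ i, R i)) [IsProbabilityMeasure ν]
    [ν.IsAddLeftInvariant] :
    HasProd (fun i => ∏ k ∈ Finset.range n, (1 - ((Nat.card (K i) : ℝ) ^ (k + u + 1))⁻¹))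
      (ν.real {A | Function.Surjective (Matrix.of A).mulVecLin}) := by
  let res (i : ι) : (∀ i, R i) →+* K i := (f i).comp (Pi.evalRingHom R i)
  have res_surjective (i : ι) : Function.Surjective (res i) :=
    (hf i).comp (Function.surjective_eval i)
  have res_measurable (i : ι) : Measurable (res i) := (hmeas i).comp (measurable_pi_apply i)
  have indep : iIndepFun (fun i => mapEntries (res i) n (n + u)) ν :=
    iIndepFun_of_isAddLeftInvariant_of_surjective ν _
      (fun i => measurable_mapEntries (res_measurable i)) (pi_mapEntries_surjective hf)
  have measurableSet_event (i : ι) :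
      MeasurableSet (mapEntries (res i) n (n + u) ⁻¹' {v | LinearIndependent (K i) v}) :=
    measurable_mapEntries (res_measurable i) (Set.toFinite _).measurableSet
  have indep_event :
      iIndepSet (fun i => mapEntries (res i) n (n + u) ⁻¹' {v | LinearIndependent (K i) v}) ν :=
    (iIndepSet_iff_meas_biInter measurableSet_event).2 fun S =>
      indep.measure_inter_preimage_eq_mul S fun i _ => (Set.toFinite _).measurableSet
  have iInter_event : {A | Function.Surjective (Matrix.of A).mulVecLin} =
      ⋂ i, mapEntries (res i) n (n + u) ⁻¹' {v | LinearIndependent (K i) v} := by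
    ext A
    simp only [Set.mem_ofPred_eq, mulVecLin_surjective_iff_linearIndependent_residue hf,
      Set.mem_iInter, Set.mem_preimage, res]
  rw [iInter_event]
  simpa only [fun i => measureReal_linearIndependent_mapEntries (res_surjective i)
    (res_measurable i) ν] using
    hasProd_measureReal_iInter_of_iIndepSet measurableSet_event indep_event

end ProductRing

theorem multipliable_of_nonneg_of_le_one {ι : Type*} {a : ι → ℝ} (h0 : ∀ i, 0 ≤ a i)
    (h1 : ∀ i, a i ≤ 1) : Multipliable a :=
  ⟨_, tendsto_atTop_ciInf (Finset.prod_anti_set_of_le_one h0 h1)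
    ⟨0, Set.forall_mem_range.2 fun S => S.prod_nonneg fun i _ => h0 i⟩⟩

/-- The Euler product `∏ p, (1 - p ^ (-s))` of `1 / ζ(s)` over all primes, as a real number. It also
makes sense at `s = 1`, where it is `0` rather than the inverse of the junk value
`riemannZeta 1`. -/
noncomputable def invZeta (s : ℕ) : ℝ := ∏' p : Nat.Primes, (1 - ((p : ℝ) ^ s)⁻¹)

theorem one_sub_inv_prime_pow_mem_Icc (s : ℕ) (p : Nat.Primes) :
    1 - ((p : ℝ) ^ s)⁻¹ ∈ Set.Icc (0 : ℝ) 1 :=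
  ⟨sub_nonneg.2 (inv_le_one_of_one_le₀ (one_le_pow₀ (by exact_mod_cast p.2.one_le))),
    sub_le_self _ (by positivity)⟩

theorem hasProd_invZeta (s : ℕ) :
    HasProd (fun p : Nat.Primes => 1 - ((p : ℝ) ^ s)⁻¹) (invZeta s) :=
  (multipliable_of_nonneg_of_le_one (fun p => (one_sub_inv_prime_pow_mem_Icc s p).1)
    fun p => (one_sub_inv_prime_pow_mem_Icc s p).2).hasProd

theorem invZeta_mem_Icc (s : ℕ) : invZeta s ∈ Set.Icc (0 : ℝ) 1 := by
  constructor
  · exact ge_of_tendsto' (hasProd_invZeta s) fun S =>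
      S.prod_nonneg fun p _ => (one_sub_inv_prime_pow_mem_Icc s p).1
  · exact le_of_tendsto' (hasProd_invZeta s) fun S =>
      S.prod_le_one (fun p _ => (one_sub_inv_prime_pow_mem_Icc s p).1)
        fun p _ => (one_sub_inv_prime_pow_mem_Icc s p).2

theorem ofReal_invZeta {s : ℕ} (hs : 1 < s) : (invZeta s : ℂ) = (riemannZeta s)⁻¹ := by
  have hre : 1 < (s : ℂ).re := by simpa using hs
  have hzeta := (riemannZeta_eulerProduct_hasProd hre).inv₀ (riemannZeta_ne_zero_of_one_lt_re hre)
  have hinv := (hasProd_invZeta s).map Complex.ofRealHom Complex.continuous_ofReal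
  refine hinv.unique (hzeta.congr_fun fun p => ?_)
  simp [Complex.cpow_neg]

theorem tendsto_prod_invZeta (u : ℕ) (hu : 1 ≤ u) :
    Tendsto (fun n : ℕ => ((∏ k ∈ Finset.range n, invZeta (k + u + 1) : ℝ) : ℂ)) atTop
      (𝓝 (∏' k : ℕ, (riemannZeta ((k : ℂ) + u + 1))⁻¹)) := by
  have multipliable_invZeta : Multipliable fun k : ℕ => invZeta (k + u + 1) :=
    multipliable_of_nonneg_of_le_one (fun k => (invZeta_mem_Icc _).1) fun k => (invZeta_mem_Icc _).2
  have multipliable_ofReal := multipliable_invZeta.map Complex.ofRealHom Complex.continuous_ofReal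
  have inv_zeta_eq (k : ℕ) : (riemannZeta ((k : ℂ) + u + 1))⁻¹ = invZeta (k + u + 1) := by
    rw [ofReal_invZeta (by omega)]
    push_cast
    rfl
  simp only [inv_zeta_eq, Complex.ofReal_prod]
  exact multipliable_ofReal.hasProd.tendsto_prod_nat

section Padic

variable {p : ℕ} [Fact p.Prime]

theorem toZMod_eq_iff_norm_sub_lt_one (x y : ℤ_[p]) :
    PadicInt.toZMod x = PadicInt.toZMod y ↔ ‖x - y‖ < 1 := by
  rw [← sub_eq_zero, ← map_sub, ← RingHom.mem_ker, PadicInt.ker_toZMod,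
    IsLocalRing.mem_maximalIdeal, PadicInt.mem_nonunits]

theorem measurable_toZMod : Measurable (PadicInt.toZMod : ℤ_[p] →+* ZMod p) := by
  refine measurable_to_countable fun x => ?_
  have fiber : PadicInt.toZMod ⁻¹' {PadicInt.toZMod x} = Metric.ball x 1 := by
    ext y
    rw [Set.mem_preimage, Set.mem_singleton_iff, toZMod_eq_iff_norm_sub_lt_one, mem_ball_iff_norm]
  exact fiber ▸ Metric.isOpen_ball.measurableSet

instance isLocalHom_toZMod : IsLocalHom (PadicInt.toZMod : ℤ_[p] →+* ZMod p) :=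
  .of_surjective _ (ZMod.ringHom_surjective _)

end Padic

theorem measureReal_mulVecLin_surjective_eq_prod_invZeta (n u : ℕ) (μ : Measure Zhat)
    [IsProbabilityMeasure μ] [μ.IsAddLeftInvariant] :
    (Measure.pi fun _ : Fin n => Measure.pi fun _ : Fin (n + u) => μ).real
        {A | Function.Surjective (Matrix.of A).mulVecLin} =
      ∏ k ∈ Finset.range n, invZeta (k + u + 1) := by
  have : (Measure.pi fun _ : Fin (n + u) => μ).IsAddLeftInvariant :=
    Measure.pi.isAddLeftInvariant _
  have := Measure.pi.isAddLeftInvariant fun _ : Fin n => Measure.pi fun _ : Fin (n + u) => μ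
  have hP := hasProd_measureReal_mulVecLin_surjective
    (fun p : Nat.Primes => ZMod.ringHom_surjective PadicInt.toZMod) (fun p => measurable_toZMod)
    (Measure.pi fun _ : Fin n => Measure.pi fun _ : Fin (n + u) => μ)
  simp only [Nat.card_zmod] at hP
  exact hP.unique (hasProd_prod fun k _ => hasProd_invZeta (k + u + 1))

theorem stmt3 (u : ℕ) (hu : 1 ≤ u) (μ : Measure Zhat)
    [IsProbabilityMeasure μ] [μ.IsAddHaarMeasure] :
    Tendsto (fun n : ℕ =>
        ((((Measure.pi fun _ : Fin n => Measure.pi fun _ : Fin (n + u) => μ)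
            {A | Function.Surjective (Matrix.of A).mulVecLin}).toReal : ℝ) : ℂ)) atTop
      (nhds (∏' k : ℕ, (riemannZeta ((k : ℂ) + u + 1))⁻¹)) := by
  simp only [← measureReal_def, measureReal_mulVecLin_surjective_eq_prod_invZeta]
  exact tendsto_prod_invZeta u hu
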